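/- Hoffman–Wielandt type bound: under the stated setup and assumptions, let Σ = diag(Σ_k, Σ_⊥) and let Σ' = diag(Σ̂, 0) be of conformal size, where Σ̂ contains the singular values of Â = QQ*A. Then for every p ∈ [1,∞] one has ‖Σ − Σ'‖_p ≤ ‖Σ_⊥‖_p + γ_k^{2q}·‖Σ_⊥Ω_2Ω_1†‖_p in the Schatten-p norm. -/

import Mathlib

open scoped ENNReal
open Matrix

/-- The `j`-th largest singular value (0-indexed) of a complex matrix,
obtained as the decreasingly sorted square roots of the eigenvalues of `Mᴴ * M`. -/
noncomputable def sval {m n : ℕ} (M : Matrix (Fin m) (Fin n) ℂ) (j : ℕ) : ℝ :=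
  (List.insertionSort (· ≥ ·)
    ((List.ofFn (Matrix.isHermitian_conjTranspose_mul_self M).eigenvalues).map Real.sqrt)).getD j 0

/-- The Schatten-`p` norm (`p = ∞` gives the spectral norm). -/
noncomputable def schatten {m n : ℕ} (p : ℝ≥0∞) (M : Matrix (Fin m) (Fin n) ℂ) : ℝ :=
  if p = ⊤ then sval M 0
  else (∑ j ∈ Finset.range n, sval M j ^ p.toReal) ^ (1 / p.toReal)

/-- Moore–Penrose pseudoinverse of a full-row-rank matrix. -/
noncomputable def rpinv {a b : ℕ} (M : Matrix (Fin a) (Fin b) ℂ) : Matrix (Fin b) (Fin a) ℂ :=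
  Mᴴ * (M * Mᴴ)⁻¹

/-- Rectangular diagonal matrix with entries `σ (off), σ (off+1), …` on the diagonal. -/
noncomputable def diagRect (σ : ℕ → ℝ) (off a b : ℕ) : Matrix (Fin a) (Fin b) ℂ :=
  Matrix.of fun i j => if (i : ℕ) = (j : ℕ) then (σ (off + (i : ℕ)) : ℂ) else 0

/-- The first `b` columns of a matrix with `b + c` columns. -/
def colsL {a b c : ℕ} (M : Matrix (Fin a) (Fin (b + c)) ℂ) : Matrix (Fin a) (Fin b) ℂ :=
  M.submatrix id (Fin.castAdd c)

/-- The last `c` columns of a matrix with `b + c` columns. -/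
def colsR {a b c : ℕ} (M : Matrix (Fin a) (Fin (b + c)) ℂ) : Matrix (Fin a) (Fin c) ℂ :=
  M.submatrix id (Fin.natAdd b)

/-! Put `P = QQᴴ`. As `P ≤ 1`, the singular values of `PA` are at most those of `A`, and they are
the entries of `Σ̂` up to zeros. So Mirsky's inequality `‖σ(A) - σ(PA)‖_p ≤ ‖A - PA‖_p` reduces the
theorem to a bound for `(1 - P)A`. Let `U = [U_k U_⊥]` and let `X` be a right inverse of `Ω₁`.
Since `1 - P` annihilates `(AAᴴ)^q A Ω X = U_k Σ_k^{2q+1} + U_⊥ (Σ_⊥ Σ_⊥ᴴ)^q Σ_⊥ Ω₂ X`,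
`(1 - P) U_k Σ_k = -(1 - P) U_⊥ (Σ_⊥ Σ_⊥ᴴ)^q (Σ_⊥ Ω₂ X) Σ_k^{-2q}`,
whose `p`-norm is at most `(σ_{k+1} / σ_k)^{2q} ‖Σ_⊥ Ω₂ X‖_p`; the rest of `(1 - P)A` contributes
at most `‖Σ_⊥‖_p`.

Mirsky's inequality amounts to weak majorization, which is the same as comparing
`∑ max (x i - t) 0` for every `t ≥ 0`, and on these excess functions it follows from Courant–Fischer
and a trace computation. It passes to `p`-norms because, for `p > 1`, `x ^ p` is a positive
combination of the functions `max (x - t) 0`. It also yields the triangle inequality for the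
Schatten norms. -/

open scoped InnerProductSpace
open Module (finrank)
open LinearMap (adjoint)

section DiagonalOperator

variable {ι 𝕜 E : Type*} [Fintype ι] [RCLike 𝕜] [NormedAddCommGroup E] [InnerProductSpace 𝕜 E]

/-- The operator that is diagonal in the orthonormal basis `b`, with real eigenvalues `μ`. -/
noncomputable def diagonalOperator (b : OrthonormalBasis ι 𝕜 E) (μ : ι → ℝ) : E →ₗ[𝕜] E :=
  b.toBasis.constr 𝕜 fun i => (μ i : 𝕜) • b i

@[simp]
lemma diagonalOperator_apply_basis (b : OrthonormalBasis ι 𝕜 E) (μ : ι → ℝ) (i : ι) :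
    diagonalOperator b μ (b i) = (μ i : 𝕜) • b i := by
  rw [diagonalOperator, ← b.coe_toBasis, b.toBasis.constr_basis]

lemma inner_diagonalOperator (b : OrthonormalBasis ι 𝕜 E) (μ : ι → ℝ) (x y : E) :
    ⟪diagonalOperator b μ x, y⟫_𝕜 = ∑ i, μ i * (⟪x, b i⟫_𝕜 * ⟪b i, y⟫_𝕜) := by
  simp only [diagonalOperator, Module.Basis.constr_apply_fintype, sum_inner, inner_smul_left,
    b.coe_toBasis_repr_apply, b.toBasis.equivFun_apply, b.repr_apply_apply, inner_conj_symm,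
    RCLike.conj_ofReal]
  exact Finset.sum_congr rfl fun i _ => by ring

lemma isSymmetric_diagonalOperator (b : OrthonormalBasis ι 𝕜 E) (μ : ι → ℝ) :
    (diagonalOperator b μ).IsSymmetric := fun x y => by
  rw [← inner_conj_symm x, inner_diagonalOperator, inner_diagonalOperator]
  simp [mul_comm]

lemma re_inner_diagonalOperator_self (b : OrthonormalBasis ι 𝕜 E) (μ : ι → ℝ) (x : E) :
    RCLike.re ⟪diagonalOperator b μ x, x⟫_𝕜 = ∑ i, μ i * ‖⟪b i, x⟫_𝕜‖ ^ 2 := by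
  simp only [inner_diagonalOperator, map_sum, RCLike.re_ofReal_mul, inner_mul_symm_re_eq_norm,
    norm_mul, norm_inner_symm x, sq]

lemma trace_diagonalOperator (b : OrthonormalBasis ι 𝕜 E) (μ : ι → ℝ) :
    LinearMap.trace 𝕜 E (diagonalOperator b μ) = ∑ i, (μ i : 𝕜) := by
  simp [LinearMap.trace_eq_sum_inner _ b, inner_smul_right]

lemma diagonalOperator_reindex_symm (b : OrthonormalBasis ι 𝕜 E) (μ : ι → ℝ)
    (τ : Equiv.Perm ι) : diagonalOperator (b.reindex τ.symm) (μ ∘ τ) = diagonalOperator b μ :=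
  b.toBasis.ext fun i => by
    simpa using diagonalOperator_apply_basis (b.reindex τ.symm) (μ ∘ τ) (τ.symm i)

lemma diagonalOperator_eigenvectorBasis [FiniteDimensional 𝕜 E] {n : ℕ} {T : E →ₗ[𝕜] E}
    (hT : T.IsSymmetric) (hn : finrank 𝕜 E = n) :
    diagonalOperator (hT.eigenvectorBasis hn) (hT.eigenvalues hn) = T :=
  (hT.eigenvectorBasis hn).toBasis.ext fun i => by simp [hT.apply_eigenvectorBasis hn i]

end DiagonalOperator

section CourantFischer

variable {𝕜 E F : Type*} [RCLike 𝕜] [NormedAddCommGroup E] [InnerProductSpace 𝕜 E]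
  [NormedAddCommGroup F] [InnerProductSpace 𝕜 F] {n : ℕ}

lemma exists_ne_zero_forall_inner_eq_zero_of_gt (b : OrthonormalBasis (Fin n) 𝕜 E) (j : Fin n)
    (φ : E →ₗ[𝕜] (Fin j → 𝕜)) : ∃ x ≠ 0, φ x = 0 ∧ ∀ i > j, ⟪b i, x⟫_𝕜 = 0 := by
  have : FiniteDimensional 𝕜 E := b.toBasis.finiteDimensional_of_finite
  let ψ : E →ₗ[𝕜] (Fin j → 𝕜) × (Finset.Ioi j → 𝕜) :=
    φ.prod (LinearMap.pi fun i => innerₛₗ 𝕜 (b i))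
  have hψ : finrank 𝕜 ((Fin j → 𝕜) × (Finset.Ioi j → 𝕜)) < finrank 𝕜 E := by
    have := j.2
    simp only [Module.finrank_prod, Module.finrank_fintype_fun_eq_card, Fintype.card_fin,
      Fintype.card_coe, Fin.card_Ioi, Module.finrank_eq_card_basis b.toBasis]
    omega
  obtain ⟨x, hψx, hx⟩ :=
    Submodule.exists_mem_ne_zero_of_ne_bot (LinearMap.ker_ne_bot_of_finrank_lt hψ)
  rw [LinearMap.mem_ker] at hψx
  have hφx : (ψ x).1 = 0 := by rw [hψx, Prod.fst_zero]
  have hbx : (ψ x).2 = 0 := by rw [hψx, Prod.snd_zero]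
  exact ⟨x, hx, hφx, fun i hi => congrFun hbx ⟨i, Finset.mem_Ioi.2 hi⟩⟩

/-- The Courant–Fischer principle, with subspaces of codimension at most `j` encoded as kernels of
linear maps to a `j`-dimensional space. -/
theorem le_iff_exists_re_inner_diagonalOperator_le (b : OrthonormalBasis (Fin n) 𝕜 E)
    {μ : Fin n → ℝ} (hμ : Antitone μ) (j : Fin n) (c : ℝ) :
    μ j ≤ c ↔ ∃ φ : E →ₗ[𝕜] (Fin j → 𝕜), ∀ x, φ x = 0 →
      RCLike.re ⟪diagonalOperator b μ x, x⟫_𝕜 ≤ c * ‖x‖ ^ 2 := by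
  simp only [re_inner_diagonalOperator_self, ← b.sum_sq_norm_inner_right, Finset.mul_sum]
  constructor
  · intro hj
    refine ⟨LinearMap.pi fun i => innerₛₗ 𝕜 (b (i.castLE j.2.le)), fun x hx =>
      Finset.sum_le_sum fun i _ => ?_⟩
    rcases lt_or_ge i j with hij | hij
    · have : ⟪b i, x⟫_𝕜 = 0 := congrFun hx ⟨i, hij⟩
      simp [this]
    · gcongr
      exact (hμ hij).trans hj
  · rintro ⟨φ, hφ⟩
    obtain ⟨x, hx, hφx, hxj⟩ := exists_ne_zero_forall_inner_eq_zero_of_gt b j φ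
    have hpos : 0 < ∑ i, ‖⟪b i, x⟫_𝕜‖ ^ 2 := by
      rw [b.sum_sq_norm_inner_right]
      positivity
    refine le_of_mul_le_mul_right ?_ hpos
    rw [Finset.mul_sum, Finset.mul_sum]
    refine (Finset.sum_le_sum fun i _ => ?_).trans (hφ x hφx)
    rcases le_or_gt i j with hij | hij
    · gcongr
      exact hμ hij
    · simp [hxj i hij]

variable [FiniteDimensional 𝕜 E] [FiniteDimensional 𝕜 F]

theorem eigenvalues_le_iff {T : E →ₗ[𝕜] E} (hT : T.IsSymmetric) (hn : finrank 𝕜 E = n)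
    (j : Fin n) (c : ℝ) :
    hT.eigenvalues hn j ≤ c ↔ ∃ φ : E →ₗ[𝕜] (Fin j → 𝕜), ∀ x, φ x = 0 →
      RCLike.re ⟪T x, x⟫_𝕜 ≤ c * ‖x‖ ^ 2 := by
  rw [le_iff_exists_re_inner_diagonalOperator_le (hT.eigenvectorBasis hn)
    (hT.eigenvalues_antitone hn), diagonalOperator_eigenvectorBasis]

theorem eigenvalues_diagonalOperator (b : OrthonormalBasis (Fin n) 𝕜 E) {μ : Fin n → ℝ}
    {τ : Equiv.Perm (Fin n)} (hτ : Antitone (μ ∘ τ)) (hn : finrank 𝕜 E = n) :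
    (isSymmetric_diagonalOperator b μ).eigenvalues hn = μ ∘ τ := by
  funext j
  refine eq_of_forall_ge_iff fun c => ?_
  rw [eigenvalues_le_iff, ← diagonalOperator_reindex_symm b μ τ,
    le_iff_exists_re_inner_diagonalOperator_le (b.reindex τ.symm) hτ]

theorem singularValues_of_adjoint_comp_self {T : E →ₗ[𝕜] F} (b : OrthonormalBasis (Fin n) 𝕜 E)
    {s : Fin n → ℝ} (hs : ∀ i, 0 ≤ s i) {τ : Equiv.Perm (Fin n)} (hτ : Antitone (s ∘ τ))
    (hT : adjoint T ∘ₗ T = diagonalOperator b fun i => s i ^ 2) (j : Fin n) :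
    T.singularValues j = s (τ j) := by
  have hn : finrank 𝕜 E = n := by simpa using Module.finrank_eq_card_basis b.toBasis
  have hτ2 : Antitone ((fun i => s i ^ 2) ∘ τ) := fun i j hij =>
    pow_le_pow_left₀ (hs _) (hτ hij) 2
  rw [T.singularValues_fin hn]
  simp only [hT]
  rw [eigenvalues_diagonalOperator b hτ2 hn]
  exact Real.sqrt_sq (hs _)

theorem singularValues_le_iff (T : E →ₗ[𝕜] F) (j : ℕ) {c : ℝ} (hc : 0 ≤ c) :
    T.singularValues j ≤ c ↔ ∃ φ : E →ₗ[𝕜] (Fin j → 𝕜), ∀ x, φ x = 0 → ‖T x‖ ≤ c * ‖x‖ := by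
  rcases lt_or_ge j (finrank 𝕜 E) with hj | hj
  · rw [← sq_le_sq₀ (T.singularValues_nonneg j) hc, T.sq_singularValues_of_lt rfl hj,
      eigenvalues_le_iff]
    refine exists_congr fun φ => forall₂_congr fun x _ => ?_
    rw [LinearMap.comp_apply, LinearMap.adjoint_inner_left, inner_self_eq_norm_sq, ← mul_pow,
      sq_le_sq₀ (norm_nonneg _) (by positivity)]
  · obtain ⟨φ, hφ⟩ := (finrank_le_iff_exists_linearMap (R := 𝕜) (M := E) (M' := Fin j → 𝕜)).1
      (by simpa using hj)
    simp only [T.singularValues_of_finrank_le hj, hc, true_iff]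
    refine ⟨φ, fun x hx => ?_⟩
    simp [(map_eq_zero_iff φ hφ).1 hx]

theorem eigenvalues_le_add {S T : E →ₗ[𝕜] E} (hS : S.IsSymmetric) (hT : T.IsSymmetric)
    (hn : finrank 𝕜 E = n) {t : ℝ}
    (h : ∀ x, RCLike.re ⟪S x, x⟫_𝕜 ≤ RCLike.re ⟪T x, x⟫_𝕜 + t * ‖x‖ ^ 2) (j : Fin n) :
    hS.eigenvalues hn j ≤ hT.eigenvalues hn j + t := by
  obtain ⟨φ, hφ⟩ := (eigenvalues_le_iff hT hn j _).1 le_rfl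
  refine (eigenvalues_le_iff hS hn j _).2 ⟨φ, fun x hx => ?_⟩
  linarith [h x, hφ x hx]

/-- The Fan–Hoffman inequality. -/
theorem eigenvalues_le_singularValues {S M : E →ₗ[𝕜] E} (hS : S.IsSymmetric)
    (hn : finrank 𝕜 E = n) (h : ∀ x, RCLike.re ⟪S x, x⟫_𝕜 ≤ RCLike.re ⟪M x, x⟫_𝕜) (j : Fin n) :
    hS.eigenvalues hn j ≤ M.singularValues j := by
  obtain ⟨φ, hφ⟩ := (singularValues_le_iff M j (M.singularValues_nonneg j)).1 le_rfl
  refine (eigenvalues_le_iff hS hn j _).2 ⟨φ, fun x hx => (h x).trans ?_⟩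
  calc RCLike.re ⟪M x, x⟫_𝕜 ≤ ‖M x‖ * ‖x‖ := re_inner_le_norm _ _
    _ ≤ M.singularValues j * ‖x‖ * ‖x‖ := by gcongr; exact hφ x hx
    _ = M.singularValues j * ‖x‖ ^ 2 := by ring

theorem singularValues_comp_comp_le {E' F' : Type*} [NormedAddCommGroup E']
    [InnerProductSpace 𝕜 E'] [FiniteDimensional 𝕜 E'] [NormedAddCommGroup F']
    [InnerProductSpace 𝕜 F'] [FiniteDimensional 𝕜 F'] (T : E →ₗ[𝕜] F) {L : F →ₗ[𝕜] F'}
    {R : E' →ₗ[𝕜] E} {a b : ℝ} (ha : 0 ≤ a) (hb : 0 ≤ b) (hL : ∀ y, ‖L y‖ ≤ a * ‖y‖)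
    (hR : ∀ x, ‖R x‖ ≤ b * ‖x‖) (j : ℕ) :
    (L ∘ₗ T ∘ₗ R).singularValues j ≤ a * b * T.singularValues j := by
  have hT := T.singularValues_nonneg j
  obtain ⟨φ, hφ⟩ := (singularValues_le_iff T j hT).1 le_rfl
  refine (singularValues_le_iff _ j (by positivity)).2 ⟨φ ∘ₗ R, fun x hx => ?_⟩
  calc ‖L (T (R x))‖ ≤ a * ‖T (R x)‖ := hL _
    _ ≤ a * (T.singularValues j * ‖R x‖) := by gcongr; exact hφ _ hx
    _ ≤ a * (T.singularValues j * (b * ‖x‖)) := by gcongr; exact hR x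
    _ = a * b * T.singularValues j * ‖x‖ := by ring

end CourantFischer

section Perturbation

variable {𝕜 E F : Type*} [RCLike 𝕜] [NormedAddCommGroup E] [InnerProductSpace 𝕜 E]
  [FiniteDimensional 𝕜 E] [NormedAddCommGroup F] [InnerProductSpace 𝕜 F] [FiniteDimensional 𝕜 F]
  {n : ℕ}

lemma sum_eigenvalues_add_diagonalOperator {T : E →ₗ[𝕜] E} (hT : T.IsSymmetric)
    (hn : finrank 𝕜 E = n) (b : OrthonormalBasis (Fin n) 𝕜 E) (μ : Fin n → ℝ) :
    ∑ j, (hT.add (isSymmetric_diagonalOperator b μ)).eigenvalues hn j =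
      ∑ j, hT.eigenvalues hn j + ∑ j, μ j := by
  rw [← LinearMap.IsSymmetric.re_trace_eq_sum_eigenvalues,
    ← LinearMap.IsSymmetric.re_trace_eq_sum_eigenvalues, map_add, map_add, trace_diagonalOperator]
  simp

omit [FiniteDimensional 𝕜 E] in
lemma re_inner_le_re_inner_diagonalOperator_max_add (b : OrthonormalBasis (Fin n) 𝕜 E)
    (μ : Fin n → ℝ) (t : ℝ) (x : E) :
    RCLike.re ⟪diagonalOperator b μ x, x⟫_𝕜 ≤
      RCLike.re ⟪diagonalOperator b (fun i => max (μ i - t) 0) x, x⟫_𝕜 + t * ‖x‖ ^ 2 := by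
  rw [re_inner_diagonalOperator_self, re_inner_diagonalOperator_self, ← b.sum_sq_norm_inner_right,
    Finset.mul_sum, ← Finset.sum_add_distrib]
  refine Finset.sum_le_sum fun i _ => ?_
  rw [← add_mul]
  gcongr
  linarith [le_max_left (μ i - t) 0]

/-- A Lidskii-type inequality: adding the part of `S - T` above `t` to `T` lifts every eigenvalue
of `T` to at least that of `S - t`, and the total lift is a trace. -/
theorem sum_max_eigenvalues_sub_le {S T : E →ₗ[𝕜] E} (hS : S.IsSymmetric) (hT : T.IsSymmetric)
    (hn : finrank 𝕜 E = n) (t : ℝ) :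
    ∑ j, max (hS.eigenvalues hn j - hT.eigenvalues hn j - t) 0 ≤
      ∑ j, max ((hS.sub hT).eigenvalues hn j - t) 0 := by
  set μ := (hS.sub hT).eigenvalues hn
  set b := (hS.sub hT).eigenvectorBasis hn
  set P := diagonalOperator b fun i => max (μ i - t) 0
  have hP : P.IsSymmetric := isSymmetric_diagonalOperator b _
  have hST (x : E) :
      RCLike.re ⟪S x, x⟫_𝕜 ≤ RCLike.re ⟪(T + P) x, x⟫_𝕜 + t * ‖x‖ ^ 2 := by
    have := re_inner_le_re_inner_diagonalOperator_max_add b μ t x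
    rw [diagonalOperator_eigenvectorBasis, LinearMap.sub_apply, inner_sub_left, map_sub] at this
    rw [LinearMap.add_apply, inner_add_left, map_add]
    linarith
  have hT_le (x : E) :
      RCLike.re ⟪T x, x⟫_𝕜 ≤ RCLike.re ⟪(T + P) x, x⟫_𝕜 + 0 * ‖x‖ ^ 2 := by
    have : 0 ≤ RCLike.re ⟪P x, x⟫_𝕜 := by
      rw [re_inner_diagonalOperator_self]
      positivity
    rw [LinearMap.add_apply, inner_add_left, map_add]
    linarith
  calc ∑ j, max (hS.eigenvalues hn j - hT.eigenvalues hn j - t) 0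
      ≤ ∑ j, ((hT.add hP).eigenvalues hn j - hT.eigenvalues hn j) := by
        refine Finset.sum_le_sum fun j _ => max_le ?_ ?_
        · linarith [eigenvalues_le_add hS (hT.add hP) hn hST j]
        · linarith [eigenvalues_le_add hT (hT.add hP) hn hT_le j]
    _ = ∑ j, max (μ j - t) 0 := by
        rw [Finset.sum_sub_distrib, sum_eigenvalues_add_diagonalOperator hT, add_sub_cancel_left]

lemma norm_apply_sq_eq_sum_singularValues (T : E →ₗ[𝕜] F) (hn : finrank 𝕜 E = n) (x : E) :
    ‖T x‖ ^ 2 = ∑ j : Fin n, T.singularValues j ^ 2 *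
      ‖⟪T.isSymmetric_adjoint_comp_self.eigenvectorBasis hn j, x⟫_𝕜‖ ^ 2 := by
  simp only [T.sq_singularValues_fin hn]
  rw [← re_inner_diagonalOperator_self, diagonalOperator_eigenvectorBasis, LinearMap.comp_apply,
    LinearMap.adjoint_inner_left, inner_self_eq_norm_sq]

lemma norm_adjoint_apply_le {T : E →ₗ[𝕜] F} (hT : ∀ x, ‖T x‖ ≤ ‖x‖) (y : F) :
    ‖adjoint T y‖ ≤ ‖y‖ := by
  have h : ‖adjoint T y‖ * ‖adjoint T y‖ ≤ ‖y‖ * ‖adjoint T y‖ := by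
    rw [← inner_self_eq_norm_mul_norm (𝕜 := 𝕜), LinearMap.adjoint_inner_left]
    exact (re_inner_le_norm _ _).trans (mul_le_mul_of_nonneg_left (hT _) (norm_nonneg y))
  rcases (norm_nonneg (adjoint T y)).eq_or_lt with h0 | h0
  · exact h0 ▸ norm_nonneg y
  · exact le_of_mul_le_mul_right h h0

/-- The polar decomposition `T = U |T|` in the form `Uᴴ T = |T|`. -/
theorem exists_comp_eq_diagonalOperator_singularValues (T : E →ₗ[𝕜] F) (hn : finrank 𝕜 E = n) :
    ∃ (L : F →ₗ[𝕜] E) (b : OrthonormalBasis (Fin n) 𝕜 E), (∀ y, ‖L y‖ ≤ ‖y‖) ∧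
      L ∘ₗ T = diagonalOperator b fun j => T.singularValues j := by
  let hT := T.isSymmetric_adjoint_comp_self
  let b := hT.eigenvectorBasis hn
  let G := diagonalOperator b fun j => (T.singularValues j)⁻¹
  have hG : G.IsSymmetric := isSymmetric_diagonalOperator b _
  have hTG (x : E) : ‖(T ∘ₗ G) x‖ ≤ ‖x‖ := by
    rw [← sq_le_sq₀ (norm_nonneg _) (norm_nonneg _), LinearMap.comp_apply,
      norm_apply_sq_eq_sum_singularValues T hn, ← b.sum_sq_norm_inner_right]
    refine Finset.sum_le_sum fun j _ => ?_
    rw [← hG, diagonalOperator_apply_basis, inner_smul_left, norm_mul, mul_pow, ← mul_assoc]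
    refine mul_le_of_le_one_left (by positivity) ?_
    rw [RCLike.norm_conj, RCLike.norm_ofReal, sq_abs, ← mul_pow]
    exact pow_le_one₀ (by have := T.singularValues_nonneg j; positivity) mul_inv_le_one
  refine ⟨adjoint (T ∘ₗ G), b, norm_adjoint_apply_le hTG, b.toBasis.ext fun j => ?_⟩
  have hTT : adjoint T (T (b j)) = ((T.singularValues j ^ 2 : ℝ) : 𝕜) • b j := by
    rw [T.sq_singularValues_fin hn]
    exact hT.apply_eigenvectorBasis hn j
  simp only [LinearMap.adjoint_comp, hG.adjoint_eq, LinearMap.comp_apply, b.coe_toBasis, hTT,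
    map_smul, G, diagonalOperator_apply_basis, smul_smul, ← RCLike.ofReal_mul]
  rw [sq, mul_self_mul_inv]

/-- The Hermitian part of an operator, which has the same real quadratic form. -/
noncomputable def hermitianPart (M : E →ₗ[𝕜] E) : E →ₗ[𝕜] E :=
  ((2⁻¹ : ℝ) : 𝕜) • (M + adjoint M)

lemma isSymmetric_hermitianPart (M : E →ₗ[𝕜] E) : (hermitianPart M).IsSymmetric := fun x y => by
  simp only [hermitianPart, LinearMap.smul_apply, LinearMap.add_apply, inner_smul_left,
    inner_smul_right, inner_add_left, inner_add_right, LinearMap.adjoint_inner_left,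
    LinearMap.adjoint_inner_right, RCLike.conj_ofReal, add_comm]

lemma re_inner_hermitianPart_self (M : E →ₗ[𝕜] E) (x : E) :
    RCLike.re ⟪hermitianPart M x, x⟫_𝕜 = RCLike.re ⟪M x, x⟫_𝕜 := by
  rw [hermitianPart, LinearMap.smul_apply, LinearMap.add_apply, inner_smul_left, inner_add_left,
    LinearMap.adjoint_inner_left, RCLike.conj_ofReal, RCLike.re_ofReal_mul, map_add,
    inner_re_symm x]
  ring

/-- Mirsky's inequality in one-sided form. The polar decomposition of `A` reduces it to symmetric
operators. -/
theorem sum_max_singularValues_sub_le (A B : E →ₗ[𝕜] F) (hn : finrank 𝕜 E = n) (t : ℝ) :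
    ∑ j : Fin n, max (A.singularValues j - B.singularValues j - t) 0 ≤
      ∑ j : Fin n, max ((A - B).singularValues j - t) 0 := by
  obtain ⟨L, b, hL, hLA⟩ := exists_comp_eq_diagonalOperator_singularValues A hn
  have hL_comp (T : E →ₗ[𝕜] F) (j : ℕ) : (L ∘ₗ T).singularValues j ≤ T.singularValues j := by
    simpa using singularValues_comp_comp_le T (R := LinearMap.id) zero_le_one zero_le_one
      (by simpa using hL) (by simp) j
  let H := hermitianPart (L ∘ₗ B)
  have hH : H.IsSymmetric := isSymmetric_hermitianPart _
  have hS : (L ∘ₗ A).IsSymmetric := hLA ▸ isSymmetric_diagonalOperator b _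
  have hSA (j : Fin n) : hS.eigenvalues hn j = A.singularValues j := by
    simp only [hLA]
    exact congrFun (eigenvalues_diagonalOperator (τ := 1) b
      (μ := fun j => A.singularValues j) (fun i j hij => A.singularValues_antitone hij) hn) j
  have hHB (j : Fin n) : hH.eigenvalues hn j ≤ B.singularValues j :=
    (eigenvalues_le_singularValues hH hn (fun x => (re_inner_hermitianPart_self _ x).le) j).trans
      (hL_comp B j)
  have hSH (j : Fin n) : (hS.sub hH).eigenvalues hn j ≤ (A - B).singularValues j := by
    refine (eigenvalues_le_singularValues (M := L ∘ₗ (A - B)) _ hn (fun x => ?_) j).trans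
      (hL_comp _ j)
    simp [H, inner_sub_left, re_inner_hermitianPart_self]
  calc ∑ j : Fin n, max (A.singularValues j - B.singularValues j - t) 0
      ≤ ∑ j, max (hS.eigenvalues hn j - hH.eigenvalues hn j - t) 0 := by
        gcongr with j
        exacts [(hSA j).ge, hHB j]
    _ ≤ ∑ j, max ((hS.sub hH).eigenvalues hn j - t) 0 := sum_max_eigenvalues_sub_le hS hH hn t
    _ ≤ ∑ j : Fin n, max ((A - B).singularValues j - t) 0 := by
        gcongr with j
        exact hSH j

end Perturbation

section WeakMajorization

variable {ι κ : Type*} [Fintype ι] [Fintype κ]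

/-- Weak majorization of finite families of nonnegative reals, expressed through the excesses over
all thresholds instead of through partial sums of the decreasing rearrangements. -/
def WeaklyMajorizedBy (x : ι → ℝ) (y : κ → ℝ) : Prop :=
  ∀ t, 0 ≤ t → ∑ i, max (x i - t) 0 ≤ ∑ j, max (y j - t) 0

lemma intervalIntegrable_rpow_sub_two_mul {p : ℝ} (hp : 1 < p) {f : ℝ → ℝ} (hf : Continuous f)
    (a b : ℝ) : IntervalIntegrable (fun t => t ^ (p - 2) * f t) MeasureTheory.volume a b :=
  (intervalIntegral.intervalIntegrable_rpow' (by linarith)).mul_continuousOn hf.continuousOn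

lemma rpow_eq_integral_rpow_mul_max {p c R : ℝ} (hp : 1 < p) (hc : 0 ≤ c) (hcR : c ≤ R) :
    c ^ p = ∫ t in (0 : ℝ)..R, p * (p - 1) * (t ^ (p - 2) * max (c - t) 0) := by
  have hintegrable (a b : ℝ) := intervalIntegrable_rpow_sub_two_mul hp
    (f := fun t => max (c - t) 0) (by fun_prop) a b
  have htail : ∫ t in c..R, t ^ (p - 2) * max (c - t) 0 = 0 := by
    rw [intervalIntegral.integral_congr (g := fun _ => 0), intervalIntegral.integral_zero]
    intro t ht
    rw [Set.uIcc_of_le hcR] at ht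
    simp [ht.1]
  have hhead : ∫ t in (0 : ℝ)..c, t ^ (p - 2) * max (c - t) 0 =
      ∫ t in (0 : ℝ)..c, (c * t ^ (p - 2) - t ^ (p - 1)) := by
    refine intervalIntegral.integral_congr_ae (Filter.Eventually.of_forall fun t ht => ?_)
    rw [Set.uIoc_of_le hc] at ht
    rw [max_eq_left (by linarith [ht.2]), show p - 1 = p - 2 + 1 by ring,
      Real.rpow_add_one ht.1.ne']
    ring
  rw [intervalIntegral.integral_const_mul,
    ← intervalIntegral.integral_add_adjacent_intervals (hintegrable 0 c) (hintegrable c R),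
    htail, add_zero,
    hhead, intervalIntegral.integral_sub
      ((intervalIntegral.intervalIntegrable_rpow' (by linarith)).const_mul c)
      (intervalIntegral.intervalIntegrable_rpow' (by linarith)),
    intervalIntegral.integral_const_mul, integral_rpow (.inl (by linarith)),
    integral_rpow (.inl (by linarith))]
  have hpow : c * c ^ (p - 2 + 1) = c ^ p := by
    rw [mul_comm, ← Real.rpow_add_one' hc (by linarith)]
    ring_nf
  rw [Real.zero_rpow (by linarith), Real.zero_rpow (by linarith), sub_zero, sub_zero, mul_div,
    hpow, sub_add_cancel]
  have hp0 : p ≠ 0 := by linarith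
  have : p - 1 ≠ 0 := by linarith
  have hp2 : p - 2 + 1 ≠ 0 := by linarith
  field_simp
  ring

lemma sum_rpow_eq_integral_rpow_mul_sum_max {p R : ℝ} (hp : 1 < p) {x : ι → ℝ}
    (hx : ∀ i, 0 ≤ x i) (hxR : ∀ i, x i ≤ R) :
    ∑ i, x i ^ p = ∫ t in (0 : ℝ)..R, p * (p - 1) * (t ^ (p - 2) * ∑ i, max (x i - t) 0) := by
  simp only [Finset.mul_sum, fun i => rpow_eq_integral_rpow_mul_max hp (hx i) (hxR i)]
  exact (intervalIntegral.integral_finsetSum fun i _ =>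
    (intervalIntegrable_rpow_sub_two_mul hp (by fun_prop) 0 R).const_mul _).symm

namespace WeaklyMajorizedBy

variable {x : ι → ℝ} {y : κ → ℝ}

lemma sum_le_sum (h : WeaklyMajorizedBy x y) (hx : ∀ i, 0 ≤ x i) (hy : ∀ j, 0 ≤ y j) :
    ∑ i, x i ≤ ∑ j, y j := by
  simpa [hx, hy] using h 0 le_rfl

lemma le_of_forall_le (h : WeaklyMajorizedBy x y) {c : ℝ} (hc : 0 ≤ c) (hy : ∀ j, y j ≤ c)
    (i : ι) : x i ≤ c := by
  have hle : max (x i - c) 0 ≤ 0 :=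
    calc max (x i - c) 0 ≤ ∑ i, max (x i - c) 0 :=
          Finset.single_le_sum (f := fun i => max (x i - c) 0) (fun _ _ => le_max_right _ _)
            (Finset.mem_univ i)
      _ ≤ ∑ j, max (y j - c) 0 := h c hc
      _ = 0 := Finset.sum_eq_zero fun j _ => max_eq_right (sub_nonpos.2 (hy j))
  exact sub_nonpos.1 ((le_max_left _ _).trans hle)

lemma sum_rpow_le_sum_rpow (h : WeaklyMajorizedBy x y) (hx : ∀ i, 0 ≤ x i) (hy : ∀ j, 0 ≤ y j)
    {p : ℝ} (hp : 1 < p) : ∑ i, x i ^ p ≤ ∑ j, y j ^ p := by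
  set R := ∑ i, x i + ∑ j, y j
  have hX : 0 ≤ ∑ i, x i := Finset.sum_nonneg fun i _ => hx i
  have hY : 0 ≤ ∑ j, y j := Finset.sum_nonneg fun j _ => hy j
  have hxR (i : ι) : x i ≤ R :=
    (Finset.single_le_sum (fun i _ => hx i) (Finset.mem_univ i)).trans (le_add_of_nonneg_right hY)
  have hyR (j : κ) : y j ≤ R :=
    (Finset.single_le_sum (fun j _ => hy j) (Finset.mem_univ j)).trans (le_add_of_nonneg_left hX)
  rw [sum_rpow_eq_integral_rpow_mul_sum_max hp hx hxR,
    sum_rpow_eq_integral_rpow_mul_sum_max hp hy hyR]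
  refine intervalIntegral.integral_mono_on (add_nonneg hX hY)
    ((intervalIntegrable_rpow_sub_two_mul hp (by fun_prop) 0 R).const_mul _)
    ((intervalIntegrable_rpow_sub_two_mul hp (by fun_prop) 0 R).const_mul _) fun t ht => ?_
  exact mul_le_mul_of_nonneg_left (mul_le_mul_of_nonneg_left (h t ht.1) (Real.rpow_nonneg ht.1 _))
    (mul_nonneg (by linarith) (by linarith))

theorem norm_toLp_le (h : WeaklyMajorizedBy x y) (hx : ∀ i, 0 ≤ x i) (hy : ∀ j, 0 ≤ y j)
    (p : ℝ≥0∞) [hp : Fact (1 ≤ p)] : ‖WithLp.toLp p x‖ ≤ ‖WithLp.toLp p y‖ := by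
  have hxn (i : ι) : ‖x i‖ = x i := Real.norm_of_nonneg (hx i)
  have hyn (j : κ) : ‖y j‖ = y j := Real.norm_of_nonneg (hy j)
  rcases eq_or_ne p ⊤ with rfl | hp_top
  · rw [PiLp.norm_toLp, PiLp.norm_toLp, pi_norm_le_iff_of_nonneg (norm_nonneg y)]
    exact fun i => (hxn i).le.trans <| h.le_of_forall_le (norm_nonneg y)
      (fun j => (hyn j).ge.trans (norm_le_pi_norm y j)) i
  have hp1 : 1 ≤ p.toReal := by
    simpa using ENNReal.toReal_mono hp_top hp.out
  rw [PiLp.norm_eq_sum (by linarith), PiLp.norm_eq_sum (by linarith)]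
  simp only [hxn, hyn]
  rcases hp1.eq_or_lt with hp1 | hp1
  · simpa [← hp1] using h.sum_le_sum hx hy
  · refine Real.rpow_le_rpow (Finset.sum_nonneg fun i _ => Real.rpow_nonneg (hx i) _) ?_
      (by positivity)
    exact h.sum_rpow_le_sum_rpow hx hy hp1

end WeaklyMajorizedBy

lemma norm_toLp_mono {x y : ι → ℝ} (hx : ∀ i, 0 ≤ x i) (hxy : ∀ i, x i ≤ y i) (p : ℝ≥0∞)
    [Fact (1 ≤ p)] : ‖WithLp.toLp p x‖ ≤ ‖WithLp.toLp p y‖ :=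
  WeaklyMajorizedBy.norm_toLp_le (fun t _ => by gcongr with i; exact hxy i) hx
    (fun i => (hx i).trans (hxy i)) p

end WeakMajorization

section MatrixAlgebra

variable {ι κ 𝕜 : Type*} [Fintype ι] [DecidableEq ι] [Fintype κ] [DecidableEq κ] [RCLike 𝕜]

lemma pow_mul_eq_mul_pow {R : Type*} [Semiring R] {K : Matrix ι ι R} {M : Matrix ι κ R}
    {T : Matrix κ κ R} (h : K * M = M * T) (q : ℕ) : K ^ q * M = M * T ^ q := by
  induction q with
  | zero => simp
  | succ q ih =>
    rw [pow_succ, Matrix.mul_assoc, h, ← Matrix.mul_assoc, ih, Matrix.mul_assoc, ← pow_succ]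

omit [DecidableEq κ] in
open scoped ComplexOrder in
lemma isUnit_det_self_mul_conjTranspose_of_rank_eq {M : Matrix ι κ 𝕜}
    (hM : M.rank = Fintype.card ι) : IsUnit (M * Mᴴ).det := by
  rw [← isUnit_iff_isUnit_det, ← mulVec_surjective_iff_isUnit]
  have h : (M * Mᴴ).rank = Fintype.card ι := by rw [rank_self_mul_conjTranspose, hM]
  refine LinearMap.range_eq_top.1 (Submodule.eq_top_of_finrank_eq (h.trans ?_))
  exact (Module.finrank_fintype_fun_eq_card 𝕜).symm

omit [DecidableEq ι] in
lemma isStarProjection_mul_conjTranspose {Q : Matrix ι κ 𝕜} (hQ : Qᴴ * Q = 1) :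
    IsStarProjection (Q * Qᴴ) where
  isIdempotentElem := by
    rw [IsIdempotentElem, Matrix.mul_assoc, ← Matrix.mul_assoc Qᴴ, hQ, Matrix.one_mul]
  isSelfAdjoint := isHermitian_mul_conjTranspose_self Q

lemma one_sub_mul_conjTranspose_mul_self {Q : Matrix ι κ 𝕜} (hQ : Qᴴ * Q = 1) :
    (1 - Q * Qᴴ) * Q = 0 := by
  rw [Matrix.sub_mul, Matrix.mul_assoc, hQ, Matrix.one_mul, Matrix.mul_one, sub_self]

lemma toEuclideanLin_diagonal (μ : ι → ℝ) :
    toEuclideanLin (diagonal fun i => (μ i : 𝕜)) =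
      diagonalOperator (EuclideanSpace.basisFun ι 𝕜) μ :=
  (EuclideanSpace.basisFun ι 𝕜).toBasis.ext fun i => by
    rw [OrthonormalBasis.coe_toBasis, diagonalOperator_apply_basis]
    ext j
    simp [Pi.single_apply, RCLike.real_smul_eq_coe_mul]

end MatrixAlgebra

section OperatorNorm

open scoped Matrix.Norms.L2Operator

variable {ι κ 𝕜 : Type*} [Fintype ι] [DecidableEq ι] [Fintype κ] [DecidableEq κ] [RCLike 𝕜]

variable (ι) in
lemma l2_opNorm_one_le : ‖(1 : Matrix ι ι 𝕜)‖ ≤ 1 := by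
  rw [← diagonal_one, l2_opNorm_diagonal]
  exact (pi_norm_const_le 1).trans_eq norm_one

omit [DecidableEq ι] in
lemma l2_opNorm_le_one_of_conjTranspose_mul_self {Q : Matrix ι κ 𝕜} (hQ : Qᴴ * Q = 1) :
    ‖Q‖ ≤ 1 := by
  have h : ‖Q‖ * ‖Q‖ ≤ 1 * 1 := by
    rw [← l2_opNorm_conjTranspose_mul_self, hQ, one_mul]
    exact l2_opNorm_one_le κ
  exact (mul_self_le_mul_self_iff (norm_nonneg Q) zero_le_one).2 h

lemma l2_opNorm_one_sub_mul_conjTranspose_le_one {Q : Matrix ι κ 𝕜} (hQ : Qᴴ * Q = 1) :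
    ‖1 - Q * Qᴴ‖ ≤ 1 :=
  IsStarProjection.norm_le (1 - Q * Qᴴ) (isStarProjection_mul_conjTranspose hQ).one_sub

lemma l2_opNorm_self_mul_conjTranspose_pow_le (T : Matrix ι κ 𝕜) (q : ℕ) :
    ‖(T * Tᴴ) ^ q‖ ≤ ‖T‖ ^ (2 * q) := by
  induction q with
  | zero => simpa only [pow_zero, Nat.mul_zero] using l2_opNorm_one_le ι
  | succ q ih =>
    calc ‖(T * Tᴴ) ^ (q + 1)‖ ≤ ‖(T * Tᴴ) ^ q‖ * ‖T * Tᴴ‖ := pow_succ (T * Tᴴ) q ▸ norm_mul_le _ _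
      _ ≤ ‖T‖ ^ (2 * q) * (‖T‖ * ‖Tᴴ‖) := by gcongr; exact l2_opNorm_mul T Tᴴ
      _ = ‖T‖ ^ (2 * (q + 1)) := by rw [l2_opNorm_conjTranspose]; ring

end OperatorNorm

section SingularValues

variable {m n : ℕ}

lemma exists_perm_sqrt_eigenvalues_eq_singularValues (M : Matrix (Fin m) (Fin n) ℂ) :
    ∃ τ : Equiv.Perm (Fin n), ∀ i, √((isHermitian_conjTranspose_mul_self M).eigenvalues i) =
      (toEuclideanLin M).singularValues (τ i) := by
  let e : Fin n ≃ Fin (Fintype.card (Fin n)) := (Fintype.equivOfCardEq (Fintype.card_fin _)).symm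
  refine ⟨e.trans (finCongr (Fintype.card_fin n)), fun i => ?_⟩
  have hM : adjoint (toEuclideanLin M) ∘ₗ toEuclideanLin M = toEuclideanLin (Mᴴ * M) := by
    rw [← toEuclideanLin_conjTranspose_eq_adjoint]
    exact (toLpLin_mul_same ..).symm
  refine .trans ?_ ((toEuclideanLin M).singularValues_fin finrank_euclideanSpace (e i)).symm
  simp only [hM]
  rfl

theorem sval_eq_singularValues (M : Matrix (Fin m) (Fin n) ℂ) (j : ℕ) :
    sval M j = (toEuclideanLin M).singularValues j := by
  set s := (toEuclideanLin M).singularValues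
  obtain ⟨τ, hτ⟩ := exists_perm_sqrt_eigenvalues_eq_singularValues M
  have hperm : (List.insertionSort (· ≥ ·) ((List.ofFn
      (isHermitian_conjTranspose_mul_self M).eigenvalues).map Real.sqrt)).Perm
      (List.ofFn fun i : Fin n => s i) := by
    refine (List.perm_insertionSort _ _).trans ?_
    rw [List.map_ofFn, Function.comp_def]
    simp only [hτ]
    exact Equiv.Perm.ofFn_comp_perm τ fun i : Fin n => s i
  have hsorted : (List.ofFn fun i : Fin n => s i).Pairwise (· ≥ ·) :=
    List.pairwise_ofFn.2 fun i j hij => (toEuclideanLin M).singularValues_antitone hij.le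
  rw [sval, hperm.eq_of_pairwise' (List.pairwise_insertionSort _ _) hsorted,
    List.getD_eq_getElem?_getD, List.getElem?_ofFn]
  split_ifs with hj
  · rfl
  · exact ((toEuclideanLin M).singularValues_of_finrank_le (by simpa using hj)).symm

lemma sval_nonneg (M : Matrix (Fin m) (Fin n) ℂ) (j : ℕ) : 0 ≤ sval M j := by
  rw [sval_eq_singularValues]
  exact (toEuclideanLin M).singularValues_nonneg j

lemma sval_antitone (M : Matrix (Fin m) (Fin n) ℂ) : Antitone (sval M) := fun i j hij => by
  simpa only [sval_eq_singularValues] using (toEuclideanLin M).singularValues_antitone hij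

lemma sval_eq_zero_of_le (M : Matrix (Fin m) (Fin n) ℂ) {j : ℕ} (hj : n ≤ j) : sval M j = 0 := by
  rw [sval_eq_singularValues]
  exact (toEuclideanLin M).singularValues_of_finrank_le (by simpa using hj)

theorem schatten_eq_norm_toLp (M : Matrix (Fin m) (Fin n) ℂ) {r : ℕ} (hr : n ≤ r) (p : ℝ≥0∞)
    [hp : Fact (1 ≤ p)] : schatten p M = ‖WithLp.toLp p fun j : Fin r => sval M j‖ := by
  have hnorm (j : ℕ) : ‖sval M j‖ = sval M j := Real.norm_of_nonneg (sval_nonneg M j)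
  rcases eq_or_ne p ⊤ with rfl | hp_top
  · rw [schatten, if_pos rfl, PiLp.norm_toLp]
    refine le_antisymm ?_ ((pi_norm_le_iff_of_nonneg (sval_nonneg M 0)).2 fun j =>
      (hnorm j).trans_le (sval_antitone M j.1.zero_le))
    rcases r.eq_zero_or_pos with rfl | hr0
    · exact (sval_eq_zero_of_le M hr).trans_le (norm_nonneg _)
    · exact (hnorm 0).ge.trans (norm_le_pi_norm (fun j : Fin r => sval M j) ⟨0, hr0⟩)
  · have hp0 : 0 < p.toReal := ENNReal.toReal_pos (one_pos.trans_le hp.out).ne' hp_top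
    rw [schatten, if_neg hp_top, PiLp.norm_eq_sum hp0]
    simp only [hnorm]
    rw [Fin.sum_univ_eq_sum_range (fun j => sval M j ^ p.toReal)]
    congr 1
    refine Finset.sum_subset (Finset.range_subset_range.2 hr) fun j _ hj => ?_
    rw [sval_eq_zero_of_le M (by simpa using hj), Real.zero_rpow hp0.ne']

open scoped Matrix.Norms.L2Operator in
theorem sval_mul_mul_le {m' n' : ℕ} (L : Matrix (Fin m') (Fin m) ℂ) (N : Matrix (Fin m) (Fin n) ℂ)
    (R : Matrix (Fin n) (Fin n') ℂ) (j : ℕ) : sval (L * N * R) j ≤ ‖L‖ * ‖R‖ * sval N j := by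
  have hcomp : toEuclideanLin (L * N * R) =
      toEuclideanLin L ∘ₗ toEuclideanLin N ∘ₗ toEuclideanLin R := by
    rw [Matrix.mul_assoc, toLpLin_mul_same, toLpLin_mul_same]
  rw [sval_eq_singularValues, sval_eq_singularValues, hcomp]
  exact singularValues_comp_comp_le _ (norm_nonneg L) (norm_nonneg R) (l2_opNorm_mulVec L)
    (l2_opNorm_mulVec R) j

open scoped Matrix.Norms.L2Operator in
lemma sval_mul_mul_le_of_norm_le_one {m' n' : ℕ} {L : Matrix (Fin m') (Fin m) ℂ}
    {R : Matrix (Fin n) (Fin n') ℂ} (hL : ‖L‖ ≤ 1) (hR : ‖R‖ ≤ 1) (N : Matrix (Fin m) (Fin n) ℂ)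
    (j : ℕ) : sval (L * N * R) j ≤ sval N j :=
  (sval_mul_mul_le L N R j).trans
    (mul_le_of_le_one_left (sval_nonneg N j) (mul_le_one₀ hL (norm_nonneg R) hR))

open scoped Matrix.Norms.L2Operator in
theorem sval_mul_mul_conjTranspose {m' n' : ℕ} {W : Matrix (Fin m') (Fin m) ℂ}
    {Z : Matrix (Fin n') (Fin n) ℂ} (hW : Wᴴ * W = 1) (hZ : Zᴴ * Z = 1)
    (N : Matrix (Fin m) (Fin n) ℂ) (j : ℕ) : sval (W * N * Zᴴ) j = sval N j := by
  have hWn := l2_opNorm_le_one_of_conjTranspose_mul_self hW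
  have hZn := l2_opNorm_le_one_of_conjTranspose_mul_self hZ
  have hN : N = Wᴴ * (W * N * Zᴴ) * Z := by
    rw [← Matrix.mul_assoc, ← Matrix.mul_assoc, hW, Matrix.one_mul, Matrix.mul_assoc, hZ,
      Matrix.mul_one]
  refine le_antisymm
    (sval_mul_mul_le_of_norm_le_one hWn ((l2_opNorm_conjTranspose Z).trans_le hZn) N j) ?_
  conv_lhs => rw [hN]
  exact sval_mul_mul_le_of_norm_le_one ((l2_opNorm_conjTranspose W).trans_le hWn) hZn _ j

theorem weaklyMajorizedBy_sval_sub (A B : Matrix (Fin m) (Fin n) ℂ) :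
    WeaklyMajorizedBy (fun j : Fin n => max (sval A j - sval B j) 0)
      fun j : Fin n => sval (A - B) j := fun t ht => by
  have h := sum_max_singularValues_sub_le (toEuclideanLin A) (toEuclideanLin B)
    finrank_euclideanSpace_fin t
  have hmax (d : ℝ) : max (max d 0 - t) 0 = max (d - t) 0 := by grind
  simpa [sval_eq_singularValues, hmax] using h

/-- Mirsky's inequality. -/
theorem norm_toLp_max_sval_sub_le (A B : Matrix (Fin m) (Fin n) ℂ) (p : ℝ≥0∞) [Fact (1 ≤ p)] :
    ‖WithLp.toLp p fun j : Fin n => max (sval A j - sval B j) 0‖ ≤ schatten p (A - B) := by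
  rw [schatten_eq_norm_toLp _ le_rfl]
  exact (weaklyMajorizedBy_sval_sub A B).norm_toLp_le (fun _ => le_max_right _ _)
    (fun _ => sval_nonneg _ _) p

lemma schatten_nonneg (M : Matrix (Fin m) (Fin n) ℂ) (p : ℝ≥0∞) [Fact (1 ≤ p)] :
    0 ≤ schatten p M :=
  schatten_eq_norm_toLp M le_rfl p ▸ norm_nonneg _

open scoped Matrix.Norms.L2Operator in
theorem schatten_mul_mul_le {m' n' : ℕ} (L : Matrix (Fin m') (Fin m) ℂ)
    (N : Matrix (Fin m) (Fin n) ℂ) (R : Matrix (Fin n) (Fin n') ℂ) (p : ℝ≥0∞) [Fact (1 ≤ p)] :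
    schatten p (L * N * R) ≤ ‖L‖ * ‖R‖ * schatten p N := by
  rw [schatten_eq_norm_toLp _ (le_max_left n' n), schatten_eq_norm_toLp _ (le_max_right n' n),
    ← Real.norm_of_nonneg (mul_nonneg (norm_nonneg L) (norm_nonneg R)), ← norm_smul]
  exact norm_toLp_mono (fun j => sval_nonneg _ _) (fun j => sval_mul_mul_le L N R _) p

theorem schatten_add_le (X Y : Matrix (Fin m) (Fin n) ℂ) (p : ℝ≥0∞) [Fact (1 ≤ p)] :
    schatten p (X + Y) ≤ schatten p X + schatten p Y := by
  let d (j : Fin n) : ℝ := max (sval (X + Y) j - sval X j) 0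
  have hd : ‖WithLp.toLp p d‖ ≤ schatten p Y := by
    simpa only [add_sub_cancel_left] using norm_toLp_max_sval_sub_le (X + Y) X p
  rw [schatten_eq_norm_toLp (X + Y) le_rfl, schatten_eq_norm_toLp X le_rfl]
  calc ‖WithLp.toLp p fun j : Fin n => sval (X + Y) j‖
      ≤ ‖WithLp.toLp p ((fun j : Fin n => sval X j) + d)‖ :=
        norm_toLp_mono (fun _ => sval_nonneg _ _)
          (fun j => sub_le_iff_le_add'.1 (le_max_left _ _)) p
    _ ≤ ‖WithLp.toLp p fun j : Fin n => sval X j‖ + ‖WithLp.toLp p d‖ := by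
        rw [WithLp.toLp_add]
        exact norm_add_le _ _
    _ ≤ ‖WithLp.toLp p fun j : Fin n => sval X j‖ + schatten p Y := by gcongr

end SingularValues

section DiagRect

lemma exists_perm_antitone_comp {α : Type*} [LinearOrder α] {n : ℕ} (f : Fin n → α) :
    ∃ τ : Equiv.Perm (Fin n), Antitone (f ∘ τ) :=
  ⟨Tuple.sort (OrderDual.toDual ∘ f), Tuple.monotone_sort (OrderDual.toDual ∘ f)⟩

theorem sval_of_conjTranspose_mul_self {m n : ℕ} {M : Matrix (Fin m) (Fin n) ℂ} {s : Fin n → ℝ}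
    (hs : ∀ i, 0 ≤ s i) {τ : Equiv.Perm (Fin n)} (hτ : Antitone (s ∘ τ))
    (hM : Mᴴ * M = diagonal fun i => ((s i ^ 2 : ℝ) : ℂ)) (j : Fin n) : sval M j = s (τ j) := by
  rw [sval_eq_singularValues]
  refine singularValues_of_adjoint_comp_self (EuclideanSpace.basisFun (Fin n) ℂ) hs hτ ?_ j
  rw [← toEuclideanLin_conjTranspose_eq_adjoint, ← toEuclideanLin_diagonal]
  exact (toLpLin_mul_same ..).symm.trans (congrArg toEuclideanLin hM)

lemma diagRect_self (σ : ℕ → ℝ) (k : ℕ) :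
    diagRect σ 0 k k = diagonal fun i : Fin k => (σ i : ℂ) := by
  ext i j
  simp [diagRect, diagonal_apply, Fin.ext_iff]

lemma diagRect_sub (σ σ' : ℕ → ℝ) (off a b : ℕ) :
    diagRect σ off a b - diagRect σ' off a b = diagRect (fun i => σ i - σ' i) off a b := by
  ext i j
  by_cases h : (i : ℕ) = j <;> simp [diagRect, h]

lemma conjTranspose_diagRect_mul_self (σ : ℕ → ℝ) (off a b : ℕ) :
    (diagRect σ off a b)ᴴ * diagRect σ off a b =
      diagonal fun j : Fin b => (((if (j : ℕ) < a then |σ (off + j)| else 0) ^ 2 : ℝ) : ℂ) := by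
  ext i j
  simp only [mul_apply, conjTranspose_apply, diagRect, of_apply, diagonal_apply]
  by_cases hi : (i : ℕ) < a
  · rw [Finset.sum_eq_single_of_mem (⟨i, hi⟩ : Fin a) (Finset.mem_univ _)
      fun l _ hl => by simp [mt Fin.ext hl]]
    by_cases hij : i = j
    · subst hij
      simp [hi, pow_two]
    · simp [hij, Fin.val_ne_of_ne hij]
  · rw [Finset.sum_eq_zero fun l _ => by simp [(l.2.trans_le (not_lt.1 hi)).ne]]
    simp [hi]

theorem schatten_diagRect (d : ℕ → ℝ) (off a b : ℕ) (p : ℝ≥0∞) [Fact (1 ≤ p)] :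
    schatten p (diagRect d off a b) =
      ‖WithLp.toLp p fun j : Fin b => if (j : ℕ) < a then |d (off + j)| else 0‖ := by
  set s := fun j : Fin b => if (j : ℕ) < a then |d (off + j)| else 0
  obtain ⟨τ, hτ⟩ := exists_perm_antitone_comp s
  have hs (j : Fin b) : 0 ≤ s j := by positivity
  have hsval := sval_of_conjTranspose_mul_self hs hτ (conjTranspose_diagRect_mul_self d off a b)
  rw [schatten_eq_norm_toLp _ le_rfl]
  simp only [hsval]
  exact (LinearIsometryEquiv.piLpCongrLeft p ℝ ℝ τ.symm).norm_map (WithLp.toLp p s)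

theorem sval_diagRect {σ : ℕ → ℝ} (hσ0 : ∀ i, 0 ≤ σ i) (hσ : Antitone σ) (a b j : ℕ) :
    sval (diagRect σ 0 a b) j = if j < min a b then σ j else 0 := by
  set s := fun j : Fin b => if (j : ℕ) < a then |σ (0 + j)| else 0
  have hs (j : Fin b) : 0 ≤ s j := by positivity
  have hs_anti : Antitone (s ∘ (1 : Equiv.Perm (Fin b))) := fun i j hij => by
    rcases lt_or_ge (j : ℕ) a with hj | hj
    · simpa [s, hj, (Fin.le_def.1 hij).trans_lt hj, abs_of_nonneg (hσ0 _)] using hσ hij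
    · simpa [s, hj.not_gt] using hs i
  rcases lt_or_ge j b with hj | hj
  · rw [sval_of_conjTranspose_mul_self hs hs_anti (conjTranspose_diagRect_mul_self σ 0 a b) ⟨j, hj⟩]
    simp [s, hj, abs_of_nonneg (hσ0 _)]
  · rw [sval_eq_zero_of_le _ hj, if_neg (by omega)]

theorem schatten_diagRect_sub_le {l m n : ℕ} {A B : Matrix (Fin l) (Fin n) ℂ} {σ τ : ℕ → ℝ}
    (hA : ∀ j < min m n, sval A j = σ j) (hB : ∀ j < min m n, sval B j = τ j)
    (hBA : ∀ j, sval B j ≤ sval A j) (p : ℝ≥0∞) [Fact (1 ≤ p)] :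
    schatten p (diagRect σ 0 m n - diagRect τ 0 m n) ≤ schatten p (A - B) := by
  rw [diagRect_sub, schatten_diagRect]
  refine (norm_toLp_mono (fun j => by positivity) (fun j => ?_) p).trans
    (norm_toLp_max_sval_sub_le A B p)
  split_ifs with hj
  · have hmin := lt_min hj j.2
    rw [zero_add, ← hA j hmin, ← hB j hmin, abs_of_nonneg (sub_nonneg.2 (hBA j))]
    exact le_max_left _ _
  · exact le_max_right _ _

open scoped Matrix.Norms.L2Operator in
lemma l2_opNorm_diagRect_le {σ : ℕ → ℝ} {off : ℕ} {c : ℝ} {b : ℕ}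
    (hc : 0 ≤ c) (hσ : ∀ i < b, |σ (off + i)| ≤ c) (a : ℕ) : ‖diagRect σ off a b‖ ≤ c := by
  refine (mul_self_le_mul_self_iff (norm_nonneg _) hc).2 ?_
  rw [← l2_opNorm_conjTranspose_mul_self, conjTranspose_diagRect_mul_self, l2_opNorm_diagonal]
  refine (pi_norm_le_iff_of_nonneg (mul_self_nonneg c)).2 fun j => ?_
  rw [Complex.norm_real, Real.norm_of_nonneg (by positivity), ← sq]
  gcongr
  split_ifs
  exacts [hσ j j.2, hc]

lemma diagRect_mul_diagRect_inv {σ : ℕ → ℝ} {k : ℕ} (hσ : ∀ i < k, σ i ≠ 0) :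
    diagRect σ 0 k k * diagRect σ⁻¹ 0 k k = 1 := by
  rw [diagRect_self, diagRect_self, diagonal_mul_diagonal, ← diagonal_one]
  congr with i
  simp [hσ i i.2]

end DiagRect

section Blocks

variable {a b c : ℕ}

lemma conjTranspose_colsL_mul_colsL {M : Matrix (Fin a) (Fin (b + c)) ℂ} (hM : Mᴴ * M = 1) :
    (colsL M)ᴴ * colsL M = 1 := by
  rw [colsL, conjTranspose_submatrix, ← submatrix_mul _ _ _ id _ Function.bijective_id, hM]
  exact submatrix_one _ (Fin.castAdd_injective b c)

lemma conjTranspose_colsR_mul_colsR {M : Matrix (Fin a) (Fin (b + c)) ℂ} (hM : Mᴴ * M = 1) :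
    (colsR M)ᴴ * colsR M = 1 := by
  rw [colsR, conjTranspose_submatrix, ← submatrix_mul _ _ _ id _ Function.bijective_id, hM]
  exact submatrix_one _ (Fin.natAdd_injective c b)

lemma conjTranspose_colsL_mul_colsR {M : Matrix (Fin a) (Fin (b + c)) ℂ} (hM : Mᴴ * M = 1) :
    (colsL M)ᴴ * colsR M = 0 := by
  rw [colsL, colsR, conjTranspose_submatrix, ← submatrix_mul _ _ _ id _ Function.bijective_id, hM]
  ext i j
  have : (i : ℕ) ≠ b + j := by omega
  simp [one_apply, Fin.ext_iff, this]

lemma conjTranspose_colsR_mul_colsL {M : Matrix (Fin a) (Fin (b + c)) ℂ} (hM : Mᴴ * M = 1) :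
    (colsR M)ᴴ * colsL M = 0 := by
  simpa using congrArg conjTranspose (conjTranspose_colsL_mul_colsR hM)

lemma mul_diagRect_mul_conjTranspose {k m₂ n₂ : ℕ} (U : Matrix (Fin a) (Fin (k + m₂)) ℂ)
    (V : Matrix (Fin b) (Fin (k + n₂)) ℂ) (σ : ℕ → ℝ) :
    U * diagRect σ 0 (k + m₂) (k + n₂) * Vᴴ =
      colsL U * diagRect σ 0 k k * (colsL V)ᴴ + colsR U * diagRect σ k m₂ n₂ * (colsR V)ᴴ := by
  have h₁ (i : Fin k) (j : Fin n₂) : (i : ℕ) ≠ k + j := by omega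
  have h₂ (i : Fin m₂) (j : Fin k) : k + (i : ℕ) ≠ j := by omega
  ext i j
  simp [mul_apply, Fin.sum_univ_add, colsL, colsR, diagRect, h₁, h₂]

end Blocks

section SubspaceIteration

variable {m n k m₂ n₂ : ℕ} {A : Matrix (Fin m) (Fin n) ℂ} {U : Matrix (Fin m) (Fin (k + m₂)) ℂ}
  {V : Matrix (Fin n) (Fin (k + n₂)) ℂ} {S : Matrix (Fin k) (Fin k) ℂ}
  {T : Matrix (Fin m₂) (Fin n₂) ℂ}

lemma mul_colsL_of_eq_add (hV : Vᴴ * V = 1)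
    (hA : A = colsL U * S * (colsL V)ᴴ + colsR U * T * (colsR V)ᴴ) :
    A * colsL V = colsL U * S := by
  rw [hA, Matrix.add_mul, Matrix.mul_assoc, Matrix.mul_assoc (colsR U * T),
    conjTranspose_colsL_mul_colsL hV, conjTranspose_colsR_mul_colsL hV, Matrix.mul_one,
    Matrix.mul_zero, add_zero]

lemma mul_colsR_of_eq_add (hV : Vᴴ * V = 1)
    (hA : A = colsL U * S * (colsL V)ᴴ + colsR U * T * (colsR V)ᴴ) :
    A * colsR V = colsR U * T := by
  rw [hA, Matrix.add_mul, Matrix.mul_assoc, Matrix.mul_assoc (colsR U * T),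
    conjTranspose_colsL_mul_colsR hV, conjTranspose_colsR_mul_colsR hV, Matrix.mul_one,
    Matrix.mul_zero, zero_add]

lemma self_mul_conjTranspose_pow_mul_self (hU : Uᴴ * U = 1) (hV : Vᴴ * V = 1)
    (hA : A = colsL U * S * (colsL V)ᴴ + colsR U * T * (colsR V)ᴴ) (q : ℕ) :
    (A * Aᴴ) ^ q * A = colsL U * (S * Sᴴ) ^ q * S * (colsL V)ᴴ +
      colsR U * (T * Tᴴ) ^ q * T * (colsR V)ᴴ := by
  have hA' : Aᴴ = colsL V * Sᴴ * (colsL U)ᴴ + colsR V * Tᴴ * (colsR U)ᴴ := by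
    simp [hA, Matrix.mul_assoc]
  have hL : A * Aᴴ * colsL U = colsL U * (S * Sᴴ) := by
    rw [Matrix.mul_assoc, mul_colsL_of_eq_add hU hA', ← Matrix.mul_assoc,
      mul_colsL_of_eq_add hV hA, Matrix.mul_assoc]
  have hR : A * Aᴴ * colsR U = colsR U * (T * Tᴴ) := by
    rw [Matrix.mul_assoc, mul_colsR_of_eq_add hU hA', ← Matrix.mul_assoc,
      mul_colsR_of_eq_add hV hA, Matrix.mul_assoc]
  calc (A * Aᴴ) ^ q * A
      = (A * Aᴴ) ^ q * (colsL U * S * (colsL V)ᴴ + colsR U * T * (colsR V)ᴴ) := congrArg _ hA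
    _ = (A * Aᴴ) ^ q * colsL U * S * (colsL V)ᴴ + (A * Aᴴ) ^ q * colsR U * T * (colsR V)ᴴ := by
        simp only [Matrix.mul_add, Matrix.mul_assoc]
    _ = colsL U * (S * Sᴴ) ^ q * S * (colsL V)ᴴ + colsR U * (T * Tᴴ) ^ q * T * (colsR V)ᴴ := by
        rw [pow_mul_eq_mul_pow hL, pow_mul_eq_mul_pow hR]

lemma mul_colsL_mul_eq_neg {r ℓ : ℕ} {Z : Matrix (Fin r) (Fin m) ℂ}
    {Ω : Matrix (Fin n) (Fin ℓ) ℂ} {X : Matrix (Fin ℓ) (Fin k) ℂ} {S' : Matrix (Fin k) (Fin k) ℂ}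
    (hU : Uᴴ * U = 1) (hV : Vᴴ * V = 1)
    (hA : A = colsL U * S * (colsL V)ᴴ + colsR U * T * (colsR V)ᴴ) (hS : S * S' = 1) (q : ℕ)
    (hZ : Z * ((A * Aᴴ) ^ q * A * Ω) = 0) (hX : (colsL V)ᴴ * Ω * X = 1) :
    Z * colsL U * S =
      -(Z * colsR U * (T * Tᴴ) ^ q * (T * ((colsR V)ᴴ * Ω * X)) * (S' * S'ᴴ) ^ q) := by
  have hSS : Sᴴ * S * (S' * S'ᴴ) = 1 := by
    rw [Matrix.mul_assoc, ← Matrix.mul_assoc S, hS, Matrix.one_mul, ← conjTranspose_mul,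
      mul_eq_one_comm.1 hS, conjTranspose_one]
  have hSq : (S * Sᴴ) ^ q * S * (S' * S'ᴴ) ^ q = S := by
    rw [pow_mul_eq_mul_pow (Matrix.mul_assoc S Sᴴ S), Matrix.mul_assoc,
      pow_mul_pow_eq_one q hSS, Matrix.mul_one]
  have hsum : Z * colsL U * ((S * Sᴴ) ^ q * S) +
      Z * colsR U * (T * Tᴴ) ^ q * (T * ((colsR V)ᴴ * Ω * X)) = 0 := by
    calc _ = Z * colsL U * ((S * Sᴴ) ^ q * S) * ((colsL V)ᴴ * Ω * X) +
          Z * colsR U * (T * Tᴴ) ^ q * (T * ((colsR V)ᴴ * Ω * X)) := by rw [hX, Matrix.mul_one]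
      _ = Z * ((A * Aᴴ) ^ q * A * Ω) * X := by
          rw [self_mul_conjTranspose_pow_mul_self hU hV hA]
          simp only [Matrix.mul_add, Matrix.add_mul, Matrix.mul_assoc]
      _ = 0 := by rw [hZ, Matrix.zero_mul]
  calc Z * colsL U * S = Z * colsL U * ((S * Sᴴ) ^ q * S) * (S' * S'ᴴ) ^ q := by
        rw [Matrix.mul_assoc (Z * colsL U), hSq]
    _ = _ := by rw [eq_neg_of_add_eq_zero_left hsum, Matrix.neg_mul]

open scoped Matrix.Norms.L2Operator in
theorem schatten_mul_le_of_mul_eq_zero {r ℓ : ℕ} {Z : Matrix (Fin r) (Fin m) ℂ}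
    {Ω : Matrix (Fin n) (Fin ℓ) ℂ} {X : Matrix (Fin ℓ) (Fin k) ℂ} {S' : Matrix (Fin k) (Fin k) ℂ}
    (hU : Uᴴ * U = 1) (hV : Vᴴ * V = 1)
    (hA : A = colsL U * S * (colsL V)ᴴ + colsR U * T * (colsR V)ᴴ) (hS : S * S' = 1) (q : ℕ)
    (hZ1 : ‖Z‖ ≤ 1) (hZ : Z * ((A * Aᴴ) ^ q * A * Ω) = 0) (hX : (colsL V)ᴴ * Ω * X = 1)
    (p : ℝ≥0∞) [Fact (1 ≤ p)] :
    schatten p (Z * A) ≤ schatten p T +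
      (‖T‖ * ‖S'‖) ^ (2 * q) * schatten p (T * ((colsR V)ᴴ * Ω * X)) := by
  have hUR := l2_opNorm_le_one_of_conjTranspose_mul_self (conjTranspose_colsR_mul_colsR hU)
  have hVL := (l2_opNorm_conjTranspose (colsL V)).trans_le
    (l2_opNorm_le_one_of_conjTranspose_mul_self (conjTranspose_colsL_mul_colsL hV))
  have hVR := (l2_opNorm_conjTranspose (colsR V)).trans_le
    (l2_opNorm_le_one_of_conjTranspose_mul_self (conjTranspose_colsR_mul_colsR hV))
  have hZU : ‖Z * colsR U‖ ≤ 1 := (l2_opNorm_mul _ _).trans (mul_le_one₀ hZ1 (norm_nonneg _) hUR)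
  have hsplit : Z * A = Z * colsR U * T * (colsR V)ᴴ +
      -(Z * colsR U * (T * Tᴴ) ^ q) * (T * ((colsR V)ᴴ * Ω * X)) *
        ((S' * S'ᴴ) ^ q * (colsL V)ᴴ) := by
    have hL := mul_colsL_mul_eq_neg hU hV hA hS q hZ hX
    calc Z * A = Z * colsR U * T * (colsR V)ᴴ + Z * colsL U * S * (colsL V)ᴴ := by
          rw [hA, Matrix.mul_add, add_comm]
          simp only [Matrix.mul_assoc]
      _ = _ := by rw [hL]; simp only [Matrix.neg_mul, Matrix.mul_assoc]
  have hL : ‖-(Z * colsR U * (T * Tᴴ) ^ q)‖ ≤ ‖T‖ ^ (2 * q) := by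
    rw [norm_neg]
    exact (l2_opNorm_mul _ _).trans ((mul_le_of_le_one_left (norm_nonneg _) hZU).trans
      (l2_opNorm_self_mul_conjTranspose_pow_le T q))
  have hR : ‖(S' * S'ᴴ) ^ q * (colsL V)ᴴ‖ ≤ ‖S'‖ ^ (2 * q) :=
    (l2_opNorm_mul _ _).trans ((mul_le_of_le_one_right (norm_nonneg _) hVL).trans
      (l2_opNorm_self_mul_conjTranspose_pow_le S' q))
  rw [hsplit, mul_pow]
  refine (schatten_add_le _ _ p).trans (add_le_add ?_ ?_)
  · refine (schatten_mul_mul_le _ _ _ p).trans (mul_le_of_le_one_left (schatten_nonneg _ p) ?_)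
    exact mul_le_one₀ hZU (norm_nonneg _) hVR
  · refine (schatten_mul_mul_le _ _ _ p).trans ?_
    gcongr
    exact schatten_nonneg _ p

open scoped Matrix.Norms.L2Operator in
theorem schatten_mul_le_of_eq_mul_diagRect {r ℓ : ℕ} {Z : Matrix (Fin r) (Fin m) ℂ}
    {Ω : Matrix (Fin n) (Fin ℓ) ℂ} {X : Matrix (Fin ℓ) (Fin k) ℂ} {σ : ℕ → ℝ}
    (hU : Uᴴ * U = 1) (hV : Vᴴ * V = 1) (hσ0 : ∀ i, 0 ≤ σ i) (hσ : Antitone σ)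
    (hA : A = U * diagRect σ 0 (k + m₂) (k + n₂) * Vᴴ) {c : ℝ} (hc : 0 < c)
    (hcσ : ∀ i < k, c ≤ σ i) (q : ℕ) (hZ1 : ‖Z‖ ≤ 1) (hZ : Z * ((A * Aᴴ) ^ q * A * Ω) = 0)
    (hX : (colsL V)ᴴ * Ω * X = 1) (p : ℝ≥0∞) [Fact (1 ≤ p)] :
    schatten p (Z * A) ≤ schatten p (diagRect σ k m₂ n₂) +
      (σ k / c) ^ (2 * q) * schatten p (diagRect σ k m₂ n₂ * ((colsR V)ᴴ * Ω * X)) := by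
  have hinv := diagRect_mul_diagRect_inv fun i hi => (hc.trans_le (hcσ i hi)).ne'
  have htail : ‖diagRect σ k m₂ n₂‖ ≤ σ k := l2_opNorm_diagRect_le (hσ0 k) (fun i _ => by
    simpa only [abs_of_nonneg (hσ0 _)] using hσ (k.le_add_right i)) m₂
  have hhead : ‖diagRect σ⁻¹ 0 k k‖ ≤ c⁻¹ := l2_opNorm_diagRect_le (by positivity) (fun i hi => by
    simpa only [zero_add, Pi.inv_apply, abs_inv, abs_of_nonneg (hσ0 i)] using
      inv_anti₀ hc (hcσ i hi)) k
  refine (schatten_mul_le_of_mul_eq_zero hU hV (hA.trans (mul_diagRect_mul_conjTranspose U V σ))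
    hinv q hZ1 hZ hX p).trans ?_
  rw [div_eq_mul_inv]
  gcongr
  exacts [schatten_nonneg _ p, hσ0 k]

end SubspaceIteration

section Projection

variable {m n r : ℕ} {Q : Matrix (Fin m) (Fin r) ℂ}

open scoped Matrix.Norms.L2Operator in
lemma sval_mul_conjTranspose_mul_le (hQ : Qᴴ * Q = 1) (A : Matrix (Fin m) (Fin n) ℂ) (j : ℕ) :
    sval (Q * Qᴴ * A) j ≤ sval A j := by
  have hP : ‖Q * Qᴴ‖ ≤ 1 :=
    IsStarProjection.norm_le (Q * Qᴴ) (isStarProjection_mul_conjTranspose hQ)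
  simpa only [Matrix.mul_one] using sval_mul_mul_le_of_norm_le_one hP (l2_opNorm_one_le (Fin n)) A j

theorem schatten_diagRect_sub_le_schatten_one_sub_mul {a s : ℕ} {A : Matrix (Fin m) (Fin n) ℂ}
    {U : Matrix (Fin m) (Fin a) ℂ} {V : Matrix (Fin n) (Fin n) ℂ} {σ : ℕ → ℝ}
    (hU : Uᴴ * U = 1) (hV : Vᴴ * V = 1) (hσ0 : ∀ i, 0 ≤ σ i) (hσ : Antitone σ)
    (hA : A = U * diagRect σ 0 a n * Vᴴ)
    {W : Matrix (Fin r) (Fin s) ℂ} {Z : Matrix (Fin n) (Fin s) ℂ} {τ : ℕ → ℝ} (hQ : Qᴴ * Q = 1)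
    (hW : Wᴴ * W = 1) (hZ : Zᴴ * Z = 1) (hτ0 : ∀ i, 0 ≤ τ i) (hτ : Antitone τ)
    (hB : Qᴴ * A = W * diagRect τ 0 s s * Zᴴ) (p : ℝ≥0∞) [Fact (1 ≤ p)] :
    schatten p (diagRect σ 0 a n - diagRect (fun i => if i < s then τ i else 0) 0 a n) ≤
      schatten p ((1 - Q * Qᴴ) * A) := by
  have hQW : (Q * W)ᴴ * (Q * W) = 1 := by
    rw [conjTranspose_mul, Matrix.mul_assoc, ← Matrix.mul_assoc Qᴴ, hQ, Matrix.one_mul, hW]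
  rw [Matrix.sub_mul, Matrix.one_mul]
  refine schatten_diagRect_sub_le (fun j hj => ?_) (fun j _ => ?_)
    (sval_mul_conjTranspose_mul_le hQ A) p
  · rw [hA, sval_mul_mul_conjTranspose hU hV, sval_diagRect hσ0 hσ, if_pos hj]
  · rw [Matrix.mul_assoc, hB, ← Matrix.mul_assoc, ← Matrix.mul_assoc,
      sval_mul_mul_conjTranspose hQW hZ, sval_diagRect hτ0 hτ, min_self]

end Projection

lemma mul_rpinv {a b : ℕ} {M : Matrix (Fin a) (Fin b) ℂ} (hM : M.rank = a) :
    M * rpinv M = 1 := by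
  rw [rpinv, ← Matrix.mul_assoc,
    mul_nonsing_inv _ (isUnit_det_self_mul_conjTranspose_of_rank_eq (by simpa using hM))]

theorem hoffman_wielandt_schatten_general
    {k m₂ n₂ ℓ r s : ℕ} (q : ℕ) (A : Matrix (Fin (k + m₂)) (Fin (k + n₂)) ℂ)
    (U : Matrix (Fin (k + m₂)) (Fin (k + m₂)) ℂ) (V : Matrix (Fin (k + n₂)) (Fin (k + n₂)) ℂ)
    (σ : ℕ → ℝ) (hU : Uᴴ * U = 1) (hV : Vᴴ * V = 1) (hσ0 : ∀ i, 0 ≤ σ i) (hσ : Antitone σ)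
    (hA : A = U * diagRect σ 0 (k + m₂) (k + n₂) * Vᴴ)
    {c : ℝ} (hc : 0 < c) (hcσ : ∀ i < k, c ≤ σ i)
    (Ω : Matrix (Fin (k + n₂)) (Fin ℓ) ℂ) (X : Matrix (Fin ℓ) (Fin k) ℂ)
    (hX : (colsL V)ᴴ * Ω * X = 1)
    (Q : Matrix (Fin (k + m₂)) (Fin r) ℂ) (R : Matrix (Fin r) (Fin ℓ) ℂ) (hQ : Qᴴ * Q = 1)
    (hQR : (A * Aᴴ) ^ q * A * Ω = Q * R)
    (W : Matrix (Fin r) (Fin s) ℂ) (Z : Matrix (Fin (k + n₂)) (Fin s) ℂ) (τ : ℕ → ℝ)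
    (hW : Wᴴ * W = 1) (hZ : Zᴴ * Z = 1) (hτ0 : ∀ i, 0 ≤ τ i) (hτ : Antitone τ)
    (hB : Qᴴ * A = W * diagRect τ 0 s s * Zᴴ) (p : ℝ≥0∞) [Fact (1 ≤ p)] :
    schatten p (diagRect σ 0 (k + m₂) (k + n₂) -
        diagRect (fun i => if i < s then τ i else 0) 0 (k + m₂) (k + n₂)) ≤
      schatten p (diagRect σ k m₂ n₂) +
        (σ k / c) ^ (2 * q) * schatten p (diagRect σ k m₂ n₂ * ((colsR V)ᴴ * Ω * X)) := by
  have hannihilate : (1 - Q * Qᴴ) * ((A * Aᴴ) ^ q * A * Ω) = 0 := by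
    rw [hQR, ← Matrix.mul_assoc, one_sub_mul_conjTranspose_mul_self hQ, Matrix.zero_mul]
  exact (schatten_diagRect_sub_le_schatten_one_sub_mul hU hV hσ0 hσ hA hQ hW hZ hτ0 hτ hB p).trans
    (schatten_mul_le_of_eq_mul_diagRect hU hV hσ0 hσ hA hc hcσ q
      (l2_opNorm_one_sub_mul_conjTranspose_le_one hQ) hannihilate hX p)

/-- Hoffman–Wielandt type bound for the singular values, Schatten-p norm version. -/
theorem hoffman_wielandt_schatten
    {k m₂ n₂ ρ : ℕ} (q : ℕ) (hk : 1 ≤ k)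
    (A : Matrix (Fin (k + m₂)) (Fin (k + n₂)) ℂ)
    (U : Matrix (Fin (k + m₂)) (Fin (k + m₂)) ℂ)
    (V : Matrix (Fin (k + n₂)) (Fin (k + n₂)) ℂ)
    (σ : ℕ → ℝ)
    (hU : Uᴴ * U = 1) (hU' : U * Uᴴ = 1)
    (hV : Vᴴ * V = 1) (hV' : V * Vᴴ = 1)
    (hσ0 : ∀ i, 0 ≤ σ i) (hσm : ∀ i j, i ≤ j → σ j ≤ σ i)
    (hA : A = U * diagRect σ 0 (k + m₂) (k + n₂) * Vᴴ)
    (hrank : 0 < σ (k - 1)) (hgap : σ k < σ (k - 1))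
    (Ω : Matrix (Fin (k + n₂)) (Fin (k + ρ)) ℂ)
    (hΩ : ((colsL V)ᴴ * Ω).rank = k)
    (Q : Matrix (Fin (k + m₂)) (Fin (k + ρ)) ℂ)
    (R : Matrix (Fin (k + ρ)) (Fin (k + ρ)) ℂ)
    (hQ : Qᴴ * Q = 1) (hR : R.BlockTriangular id)
    (hQR : (A * Aᴴ) ^ q * A * Ω = Q * R)
    (UB : Matrix (Fin (k + ρ)) (Fin (k + ρ)) ℂ)
    (Vh : Matrix (Fin (k + n₂)) (Fin (k + ρ)) ℂ)
    (σh : ℕ → ℝ)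
    (hUB : UBᴴ * UB = 1) (hUB' : UB * UBᴴ = 1)
    (hVh : Vhᴴ * Vh = 1)
    (hσh0 : ∀ i, 0 ≤ σh i) (hσhm : ∀ i j, i ≤ j → σh j ≤ σh i)
    (hB : Qᴴ * A = UB * diagRect σh 0 (k + ρ) (k + ρ) * Vhᴴ)
    :
    ∀ p : ℝ≥0∞, 1 ≤ p →
      schatten p (diagRect σ 0 (k + m₂) (k + n₂) -
          diagRect (fun i => if i < k + ρ then σh i else 0) 0 (k + m₂) (k + n₂)) ≤
        schatten p (diagRect σ k m₂ n₂) + (σ k / σ (k - 1)) ^ (2 * q) * schatten p (diagRect σ k m₂ n₂ * ((colsR V)ᴴ * Ω * rpinv ((colsL V)ᴴ * Ω))) := fun p hp =>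
  have : Fact (1 ≤ p) := ⟨hp⟩
  hoffman_wielandt_schatten_general q A U V σ hU hV hσ0 (fun i j => hσm i j) hA hrank
    (fun i hi => hσm i (k - 1) (by omega)) Ω _ (mul_rpinv hΩ) Q R hQ hQR UB Vh σh hUB hVh hσh0
    (fun i j => hσhm i j) hB p
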